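/- Let p be an odd prime, m ≥ 1, q a power of p, and a_1, ..., a_m ∈ F_p^* viewed in F_q, with D = F_n a subfield of F_q of size n. For a_0, b_0 ∈ D, let V = #{(x_1,...,x_m) ∈ D^m : Σ a_j x_j² = a_0 and Σ a_j x_j = b_0}. Then |V − n^{m−2}| ≤ n^{m/2}. -/

import Mathlib

namespace Stmt19

open Finset

variable {K : Type*} [Field K] [Fintype K] [DecidableEq K]

theorem addChar_map_sum {ι : Type*} (ψ : AddChar K ℂ) (s : Finset ι) (f : ι → K) :
    ψ (∑ i ∈ s, f i) = ∏ i ∈ s, ψ (f i) := by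
  classical
  induction s using Finset.induction_on with
  | empty => simp
  | insert i s hi ih => rw [sum_insert hi, prod_insert hi, AddChar.map_add_eq_mul, ih]

theorem norm_quad (ψ : AddChar K ℂ) (hψ : ψ.IsPrimitive) (h2 : (2 : K) ≠ 0) (u v : K)
    (hu : u ≠ 0) : ‖∑ x : K, ψ (u * x ^ 2 + v * x)‖ = Real.sqrt (Fintype.card K) := by
  have key : (∑ x : K, ψ (u * x ^ 2 + v * x)) *
      (starRingEnd ℂ) (∑ x : K, ψ (u * x ^ 2 + v * x)) = (Fintype.card K : ℂ) := by
    rw [map_sum, sum_mul_sum, sum_comm]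
    have h1 : ∀ y : K, ∑ x : K, ψ (u * x ^ 2 + v * x) *
        (starRingEnd ℂ) (ψ (u * y ^ 2 + v * y)) =
        ∑ h : K, ψ (u * h ^ 2 + v * h) * ψ (y * (2 * u * h)) := by
      intro y
      rw [← Equiv.sum_comp (Equiv.addRight y)]
      refine sum_congr rfl fun h _ => ?_
      rw [← AddChar.map_neg_eq_conj, ← AddChar.map_add_eq_mul, ← AddChar.map_add_eq_mul]
      congr 1
      simp only [Equiv.coe_addRight]
      ring
    rw [sum_congr rfl fun y _ => h1 y, sum_comm]
    simp_rw [← mul_sum, AddChar.sum_mulShift _ hψ]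
    rw [Finset.sum_eq_single 0]
    · simp
    · intro b _ hb
      rw [if_neg (by simp [h2, hu, hb])]
      simp
    · simp
  rw [Complex.mul_conj, Complex.normSq_eq_norm_sq] at key
  have key' : ‖∑ x : K, ψ (u * x ^ 2 + v * x)‖ ^ 2 = (Fintype.card K : ℝ) := by
    exact_mod_cast key
  rw [← key', Real.sqrt_sq (norm_nonneg _)]

theorem main_bound (h2 : (2 : K) ≠ 0) (m : ℕ) (hm : 1 ≤ m) (a : Fin m → K)
    (ha : ∀ j, a j ≠ 0) (a0 b0 : K) :
    |(Fintype.card K : ℝ) ^ 2 * ((univ.filter fun x : Fin m → K =>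
        (∑ i, a i * (x i) ^ 2 = a0) ∧ (∑ i, a i * x i = b0)).card : ℝ)
      - (Fintype.card K : ℝ) ^ m| ≤
      (Fintype.card K : ℝ) ^ 2 * (Real.sqrt (Fintype.card K)) ^ m := by
  obtain ⟨ψ, hψ⟩ : ∃ ψ : AddChar K ℂ, ψ.IsPrimitive := 
    ⟨AddChar.FiniteField.primitiveChar_to_Complex K,
      AddChar.FiniteField.primitiveChar_to_Complex_isPrimitive K⟩
  set n := Fintype.card K with hn
  let W : K → K → ℂ := fun s t => ∑ x : Fin m → K,
    ψ (s * (∑ i, a i * (x i) ^ 2 - a0)) * ψ (t * (∑ i, a i * x i - b0))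
  have hWprod : ∀ s t, W s t = ψ (-(s * a0 + t * b0)) *
      ∏ j, ∑ x : K, ψ (s * a j * x ^ 2 + t * a j * x) := by
    intro s t
    rw [prod_univ_sum, Fintype.piFinset_univ, mul_sum]
    refine sum_congr rfl fun x _ => ?_
    rw [← AddChar.map_add_eq_mul, ← addChar_map_sum, ← AddChar.map_add_eq_mul]
    congr 1
    rw [sum_add_distrib]
    simp only [mul_assoc, ← mul_sum]
    ring
  have hcount : ∑ s, ∑ t, W s t = (n : ℂ) ^ 2 * ((univ.filter fun x : Fin m → K =>
        (∑ i, a i * (x i) ^ 2 = a0) ∧ (∑ i, a i * x i = b0)).card : ℂ) := by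
    have : ∑ s, ∑ t, W s t = ∑ x : Fin m → K,
        (∑ s, ψ (s * (∑ i, a i * (x i) ^ 2 - a0))) * (∑ t, ψ (t * (∑ i, a i * x i - b0))) := by
      simp_rw [sum_mul_sum]
      rw [sum_comm (s := (univ : Finset (Fin m → K)))]
      refine sum_congr rfl fun s _ => ?_
      rw [sum_comm (s := (univ : Finset (Fin m → K)))]
    rw [this]
    simp_rw [AddChar.sum_mulShift _ hψ, sub_eq_zero]
    rw [card_filter]
    push_cast
    rw [mul_sum]
    refine sum_congr rfl fun x _ => ?_
    by_cases h1 : ∑ i, a i * (x i) ^ 2 = a0 <;> by_cases h3 : ∑ i, a i * x i = b0 <;>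
      simp [h1, h3, hn, sq]
  have h0 : ∑ t, W 0 t = (n : ℂ) ^ m := by
    rw [Finset.sum_eq_single 0]
    · simp [W, hn]
    · intro t _ ht
      rw [hWprod, Finset.prod_eq_zero (mem_univ (⟨0, hm⟩ : Fin m)), mul_zero]
      have := AddChar.sum_mulShift (t * a ⟨0, hm⟩) hψ
      rw [if_neg (mul_ne_zero ht (ha _))] at this
      simpa [mul_comm] using this
    · simp
  have hW : ∀ s t, s ≠ 0 → ‖W s t‖ = (Real.sqrt n) ^ m := by
    intro s t hs
    rw [hWprod, norm_mul, AddChar.norm_apply, one_mul, norm_prod]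
    rw [prod_congr rfl fun j _ => norm_quad ψ hψ h2 _ _ (mul_ne_zero hs (ha j))]
    simp [hn]
  have hsplit : (n : ℂ) ^ 2 * ((univ.filter fun x : Fin m → K =>
        (∑ i, a i * (x i) ^ 2 = a0) ∧ (∑ i, a i * x i = b0)).card : ℂ) - (n : ℂ) ^ m
        = ∑ s ∈ univ.erase (0 : K), ∑ t, W s t := by
    rw [← hcount, ← h0, ← Finset.add_sum_erase _ _ (mem_univ (0 : K))]
    ring
  have hnorm : ‖∑ s ∈ univ.erase (0 : K), ∑ t, W s t‖ ≤ (n : ℝ) ^ 2 * (Real.sqrt n) ^ m := by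
    calc _ ≤ ∑ s ∈ univ.erase (0 : K), ∑ t : K, (Real.sqrt n) ^ m := by
          refine norm_sum_le_of_le _ fun s hs => norm_sum_le_of_le _ fun t _ => ?_
          exact (hW s t (ne_of_mem_erase hs)).le
      _ ≤ ∑ s : K, ∑ t : K, (Real.sqrt n) ^ m :=
          sum_le_sum_of_subset_of_nonneg (subset_univ _) fun _ _ _ => by positivity
      _ = _ := by simp [← hn]; ring
  rw [← hsplit] at hnorm
  rw [← Real.norm_eq_abs, ← Complex.norm_real]
  push_cast
  exact hnorm

end Stmt19


/-- Let `p` be an odd prime, `F_q` of characteristic `p`, `D` a subfield of `F_q` with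
`|D| = n`, coefficients `a_1, …, a_m ∈ F_p^*` (nonzero elements of the prime field), and
`a_0, b_0 ∈ D`.  If `V` is the number of solutions `(x_1,…,x_m) ∈ D^m` of
`∑ a_j x_j² = a_0`, `∑ a_j x_j = b_0`, then `|V - n^{m-2}| ≤ n^{m/2}`. -/
theorem stmt19 {F : Type*} [Field F] [Fintype F] (p : ℕ) (hp : p.Prime) (hodd : p ≠ 2)
    [CharP F p] (D : Subfield F) (n m : ℕ) (hn : Nat.card D = n) (hm : 1 ≤ m)
    (a : Fin m → F) (ha : ∀ j, ∃ c : ℕ, 0 < c ∧ c < p ∧ a j = (c : F))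
    (a0 b0 : F) (ha0 : a0 ∈ D) (hb0 : b0 ∈ D) :
    |(Nat.card {x : Fin m → F // (∀ i, x i ∈ D) ∧
        (∑ i, a i * (x i) ^ 2 = a0) ∧ (∑ i, a i * x i = b0)} : ℝ)
      - (n : ℝ) ^ ((m : ℝ) - 2)| ≤ (n : ℝ) ^ ((m : ℝ) / 2) := by
  classical
  haveI : Fintype D := Fintype.ofFinite D
  have h2F : (2 : F) ≠ 0 := Ring.two_ne_zero (by rwa [ringChar.eq F p])
  have h2 : (2 : D) ≠ 0 := fun h => h2F (congrArg Subtype.val h)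
  choose c hc0 hcp hac using ha
  have haD : ∀ j, a j ∈ D := fun j => by rw [hac]; exact natCast_mem D _
  have hane : ∀ j, a j ≠ 0 := fun j h => by
    rw [hac, CharP.cast_eq_zero_iff F p] at h
    exact absurd (Nat.le_of_dvd (hc0 j) h) (not_le.mpr (hcp j))
  have main := Stmt19.main_bound (K := D) h2 m hm (fun j => ⟨a j, haD j⟩)
    (fun j h => hane j (congrArg Subtype.val h)) ⟨a0, ha0⟩ ⟨b0, hb0⟩
  have hcard : Nat.card {x : Fin m → F // (∀ i, x i ∈ D) ∧
        (∑ i, a i * (x i) ^ 2 = a0) ∧ (∑ i, a i * x i = b0)} =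
      (Finset.univ.filter fun x : Fin m → D =>
        (∑ i, (⟨a i, haD i⟩ : D) * (x i) ^ 2 = ⟨a0, ha0⟩) ∧
        (∑ i, (⟨a i, haD i⟩ : D) * x i = ⟨b0, hb0⟩)).card := by
    rw [← Fintype.card_subtype, ← Nat.card_eq_fintype_card]
    refine Nat.card_congr
      { toFun := fun x => ⟨fun i => ⟨x.1 i, x.2.1 i⟩, ?_, ?_⟩
        invFun := fun x => ⟨fun i => (x.1 i : F), fun i => (x.1 i).2, ?_, ?_⟩
        left_inv := fun x => rfl
        right_inv := fun x => rfl }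
    · apply Subtype.ext; simpa using x.2.2.1
    · apply Subtype.ext; simpa using x.2.2.2
    · simpa using congrArg Subtype.val x.2.1
    · simpa using congrArg Subtype.val x.2.2
  rw [hcard]
  rw [← Nat.card_eq_fintype_card, hn] at main
  have hnpos : (0 : ℝ) < n := by
    rw [← hn]; exact_mod_cast Nat.card_pos
  rw [Real.rpow_sub hnpos, Real.rpow_natCast, Real.rpow_two]
  have hs : (n : ℝ) ^ ((m : ℝ) / 2) = (Real.sqrt n) ^ m := by
    rw [Real.sqrt_eq_rpow, ← Real.rpow_natCast, ← Real.rpow_mul hnpos.le]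
    congr 1; ring
  rw [hs]
  have hn2 : (0 : ℝ) < (n : ℝ) ^ 2 := by positivity
  refine le_of_mul_le_mul_left ?_ hn2
  refine le_trans (le_of_eq ?_) main
  rw [← abs_of_pos hn2, ← abs_mul, abs_of_pos hn2, mul_sub, mul_div_cancel₀ _ hn2.ne']
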